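/- (Gaussian averaging of periodic functions) For every continuous 1-periodic function g on ℝ^d, lim_{ε→0} ε^{d/2} ∫_{ℝ^d} g(x) e^{−επ|x|²} dx = ∫_{[0,1]^d} g(x) dx. -/

import Mathlib

open MeasureTheory Filter
open scoped Real Topology

/-!
Let `ω t` be the `L¹`-distance between `φ` and its translate by `t`. If `g` is periodic with
fundamental domain `F`, then averaging `∫ φ g = ∫ φ (t + ·) g (t + ·)` over `t ∈ F` and comparing
with the average of `∫ φ g (t + ·)`, which is `(∫ φ) ⨍_F g`, costs at most `sup ‖g‖ ⨍_F ω`.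
Replacing `φ` by its dilation `s ^ d φ (s ·)` replaces `ω t` by `ω (s t)`, which tends to `0` with
`s` because translation is continuous in `L¹`. The theorem is the case of the Gaussian and
`s = √ε`.
-/

section Translation

variable {E G : Type*} [AddCommGroup E] [MeasurableSpace E] [NormedAddCommGroup G]

/-- The `L¹(μ)`-distance between `φ` and its translate by `t`, as a function of `t`; it controls
the error made when integrating `φ` against a periodic function instead of its mean. It is a
Bochner integral, hence meaningful only for integrable `φ`. -/
noncomputable def translationModulus (μ : Measure E) (φ : E → G) (t : E) : ℝ :=
  ∫ x, ‖φ (t + x) - φ x‖ ∂μ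

variable {μ : Measure E} {φ : E → G}

theorem translationModulus_zero : translationModulus μ φ 0 = 0 := by
  simp [translationModulus]

theorem norm_translationModulus_le [MeasurableAdd E] [μ.IsAddLeftInvariant]
    (hφ : Integrable φ μ) (t : E) : ‖translationModulus μ φ t‖ ≤ 2 * ∫ x, ‖φ x‖ ∂μ := by
  have htranslate : Integrable (fun x => φ (t + x)) μ := hφ.comp_add_left t
  calc ‖translationModulus μ φ t‖
      = ∫ x, ‖φ (t + x) - φ x‖ ∂μ :=
        Real.norm_of_nonneg (integral_nonneg fun x => norm_nonneg _)
    _ ≤ ∫ x, (‖φ (t + x)‖ + ‖φ x‖) ∂μ :=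
        integral_mono (htranslate.sub hφ).norm (htranslate.norm.add hφ.norm)
          fun x => norm_sub_le _ _
    _ = 2 * ∫ x, ‖φ x‖ ∂μ := by
        rw [integral_add htranslate.norm hφ.norm, integral_add_left_eq_self (fun x => ‖φ x‖),
          two_mul]

variable [TopologicalSpace E] [IsTopologicalAddGroup E] [BorelSpace E]
  [μ.IsAddLeftInvariant] [IsLocallyFiniteMeasure μ] [μ.InnerRegularCompactLTTop]

theorem continuous_translationModulus (hφ : Integrable φ μ) :
    Continuous (translationModulus μ φ) := by
  have : Fact ((1 : ENNReal) ≠ ⊤) := ⟨ENNReal.one_ne_top⟩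
  have hL1 : MemLp φ 1 μ := memLp_one_iff_integrable.2 hφ
  have hcont : Continuous fun t : E => dist (DomAddAct.mk t +ᵥ hL1.toLp φ) (hL1.toLp φ) :=
    (DomAddAct.continuous_mk.vadd continuous_const).dist continuous_const
  refine hcont.congr fun t => ?_
  rw [L1.dist_eq_integral_dist, translationModulus]
  refine integral_congr_ae ?_
  have htranslate := hL1.comp_measurePreserving (measurePreserving_vadd t μ)
  filter_upwards [htranslate.coeFn_toLp, hL1.coeFn_toLp] with x htx hx
  rw [← dist_eq_norm, hx]
  exact congrArg (dist · (φ x)) htx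

variable {ν : Measure E} [IsFiniteMeasure ν]

theorem integrable_translationModulus (hφ : Integrable φ μ) :
    Integrable (translationModulus μ φ) ν :=
  .of_bound (continuous_translationModulus hφ).aestronglyMeasurable _
    (ae_of_all _ (norm_translationModulus_le hφ))

theorem tendsto_integral_translationModulus_smul [Module ℝ E] [ContinuousSMul ℝ E]
    (hφ : Integrable φ μ) :
    Tendsto (fun s : ℝ => ∫ t, translationModulus μ φ (s • t) ∂ν) (𝓝 0) (𝓝 0) := by
  have hmodulus := continuous_translationModulus hφ
  have hmean : Continuous fun s : ℝ => ∫ t, translationModulus μ φ (s • t) ∂ν :=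
    continuous_of_dominated
      (fun s => (hmodulus.comp (continuous_const_smul s)).aestronglyMeasurable)
      (fun s => ae_of_all _ fun t => norm_translationModulus_le hφ _)
      (integrable_const _)
      (ae_of_all _ fun t => hmodulus.comp (continuous_id.smul continuous_const))
  simpa only [zero_smul, translationModulus_zero, integral_zero] using hmean.tendsto 0

end Translation

section Periodic

variable {E G : Type*} [AddCommGroup E] [MeasurableSpace E] [NormedAddCommGroup G]
  [NormedSpace ℝ G] {μ : Measure E} [μ.IsAddLeftInvariant] {L : AddSubgroup E} [Countable L]
  {F : Set E} {g : E → G} {φ : E → ℝ} {M : ℝ}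

open scoped Pointwise in
theorem setIntegral_add_left_eq_of_periodic [MeasurableAdd E]
    (hF : IsAddFundamentalDomain L F μ) (hg : ∀ v ∈ L, Function.Periodic g v) (a : E) :
    ∫ x in F, g (a + x) ∂μ = ∫ x in F, g x ∂μ := by
  have hinv : ∀ (v : L) (x : E), g (v +ᵥ x) = g x := fun v x => by
    rw [AddSubgroup.vadd_def, vadd_eq_add, add_comm]
    exact hg v v.2 x
  calc ∫ x in F, g (a + x) ∂μ
      = ∫ x in a +ᵥ F, g x ∂μ :=
        ((measurePreserving_vadd a μ).setIntegral_image_emb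
          (measurableEmbedding_const_vadd a) g F).symm
    _ = ∫ x in F, g x ∂μ := (hF.vadd_of_comm a).setIntegral_eq hF hinv

theorem integrable_smul_comp_add_prod [MeasurableAdd₂ E] [SFinite μ]
    {ν : Measure E} [IsFiniteMeasure ν] (hφ : Integrable φ μ)
    (hgm : AEStronglyMeasurable g μ) (hM : ∀ x, ‖g x‖ ≤ M) :
    Integrable (fun p : E × E => φ p.2 • g (p.1 + p.2)) (ν.prod μ) := by
  have hshift : AEStronglyMeasurable (fun p : E × E => g (p.1 + p.2)) (ν.prod μ) :=
    hgm.comp_quasiMeasurePreserving (quasiMeasurePreserving_add ν μ)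
  exact (hφ.comp_snd ν).smul_bdd M hshift (ae_of_all _ fun p => hM _)

theorem setIntegral_integral_smul_comp_add [MeasurableAdd₂ E] [SFinite μ] [CompleteSpace G]
    (hF : IsAddFundamentalDomain L F μ) (hF_fin : μ F ≠ ⊤)
    (hg : ∀ v ∈ L, Function.Periodic g v) (hgm : AEStronglyMeasurable g μ)
    (hM : ∀ x, ‖g x‖ ≤ M) (hφ : Integrable φ μ) :
    ∫ t in F, ∫ x, φ x • g (t + x) ∂μ ∂μ = (∫ x, φ x ∂μ) • ∫ t in F, g t ∂μ := by
  have : IsFiniteMeasure (μ.restrict F) := isFiniteMeasure_restrict.2 hF_fin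
  rw [integral_integral_swap (integrable_smul_comp_add_prod hφ hgm hM)]
  simp only [integral_smul, add_comm _ (_ : E), setIntegral_add_left_eq_of_periodic hF hg,
    integral_smul_const]

theorem norm_integral_smul_sub_le_of_periodic [TopologicalSpace E] [IsTopologicalAddGroup E]
    [SecondCountableTopology E] [BorelSpace E] [IsLocallyFiniteMeasure μ]
    [μ.InnerRegularCompactLTTop] [CompleteSpace G]
    (hF : IsAddFundamentalDomain L F μ) (hF_fin : μ F ≠ ⊤)
    (hg : ∀ v ∈ L, Function.Periodic g v) (hgm : AEStronglyMeasurable g μ)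
    (hM : ∀ x, ‖g x‖ ≤ M) (hφ : Integrable φ μ) :
    ‖μ.real F • ∫ x, φ x • g x ∂μ - (∫ x, φ x ∂μ) • ∫ x in F, g x ∂μ‖ ≤
      M * ∫ t in F, translationModulus μ φ t ∂μ := by
  have : IsFiniteMeasure (μ.restrict F) := isFiniteMeasure_restrict.2 hF_fin
  have hshift (t : E) : AEStronglyMeasurable (fun x => g (t + x)) μ :=
    hgm.comp_quasiMeasurePreserving (measurePreserving_add_left μ t).quasiMeasurePreserving
  have hint {ψ : E → ℝ} (hψ : Integrable ψ μ) (t : E) :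
      Integrable (fun x => ψ x • g (t + x)) μ :=
    hψ.smul_bdd M (hshift t) (ae_of_all _ fun x => hM _)
  have htranslate (t : E) : Integrable (fun x => φ (t + x)) μ := hφ.comp_add_left t
  have hmean : μ.real F • ∫ x, φ x • g x ∂μ - (∫ x, φ x ∂μ) • ∫ x in F, g x ∂μ =
      ∫ t in F, ∫ x, (φ (t + x) - φ x) • g (t + x) ∂μ ∂μ := by
    rw [← setIntegral_const, ← setIntegral_integral_smul_comp_add hF hF_fin hg hgm hM hφ,
      ← integral_sub (integrable_const _)
        (integrable_smul_comp_add_prod hφ hgm hM).integral_prod_left]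
    congr 1 with t
    simp only [sub_smul]
    rw [integral_sub (hint (htranslate t) t) (hint hφ t),
      integral_add_left_eq_self (fun x => φ x • g x)]
  have hbound (t : E) : ‖∫ x, (φ (t + x) - φ x) • g (t + x) ∂μ‖ ≤
      M * translationModulus μ φ t := by
    rw [translationModulus, ← integral_const_mul]
    refine norm_integral_le_of_norm_le (((htranslate t).sub hφ).norm.const_mul M)
      (ae_of_all _ fun x => ?_)
    rw [norm_smul, mul_comm]
    gcongr
    exact hM _
  rw [hmean, ← integral_const_mul]
  exact norm_integral_le_of_norm_le
    ((integrable_translationModulus hφ).const_mul M) (ae_of_all _ hbound)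

end Periodic

section Dilation

open Module (finrank)

variable {E G : Type*} [NormedAddCommGroup E] [NormedSpace ℝ E] [FiniteDimensional ℝ E]
  [MeasurableSpace E] [BorelSpace E] [NormedAddCommGroup G] [NormedSpace ℝ G]
  {μ : Measure E} [μ.IsAddHaarMeasure]

theorem pow_finrank_smul_integral_comp_smul (f : E → G) {s : ℝ} (hs : 0 < s) :
    s ^ finrank ℝ E • ∫ x, f (s • x) ∂μ = ∫ x, f x ∂μ := by
  rw [Measure.integral_comp_smul_of_nonneg μ f s (hR := hs.le),
    smul_inv_smul₀ (pow_pos hs _).ne']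

theorem translationModulus_pow_finrank_mul_comp_smul (φ : E → ℝ) {s : ℝ} (hs : 0 < s) (t : E) :
    translationModulus μ (fun x => s ^ finrank ℝ E * φ (s • x)) t =
      translationModulus μ φ (s • t) := by
  simp only [translationModulus]
  rw [← pow_finrank_smul_integral_comp_smul (fun x => ‖φ (s • t + x) - φ x‖) hs, smul_eq_mul,
    ← integral_const_mul]
  simp only [← mul_sub, norm_mul, Real.norm_of_nonneg (pow_pos hs _).le, smul_add]

variable [CompleteSpace G] {L : AddSubgroup E} [Countable L] {F : Set E} {g : E → G}
  {φ : E → ℝ} {M : ℝ}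

theorem norm_integral_dilation_smul_sub_le_of_periodic
    (hF : IsAddFundamentalDomain L F μ) (hF_fin : μ F ≠ ⊤)
    (hg : ∀ v ∈ L, Function.Periodic g v) (hgm : AEStronglyMeasurable g μ)
    (hM : ∀ x, ‖g x‖ ≤ M) (hφ : Integrable φ μ) {s : ℝ} (hs : 0 < s) :
    ‖μ.real F • (s ^ finrank ℝ E • ∫ x, φ (s • x) • g x ∂μ) -
        (∫ x, φ x ∂μ) • ∫ x in F, g x ∂μ‖ ≤
      M * ∫ t in F, translationModulus μ φ (s • t) ∂μ := by
  have hdilate : Integrable (fun x => s ^ finrank ℝ E * φ (s • x)) μ :=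
    (hφ.comp_smul hs.ne').const_mul _
  have hmass : ∫ x, s ^ finrank ℝ E * φ (s • x) ∂μ = ∫ x, φ x ∂μ := by
    rw [integral_const_mul, ← smul_eq_mul, pow_finrank_smul_integral_comp_smul φ hs]
  simpa only [hmass, translationModulus_pow_finrank_mul_comp_smul φ hs, mul_smul, integral_smul]
    using norm_integral_smul_sub_le_of_periodic hF hF_fin hg hgm hM hdilate

theorem tendsto_integral_dilation_smul_of_periodic
    (hF : IsAddFundamentalDomain L F μ) (hF_fin : μ F ≠ ⊤)
    (hg : ∀ v ∈ L, Function.Periodic g v) (hgm : AEStronglyMeasurable g μ)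
    (hM : ∀ x, ‖g x‖ ≤ M) (hφ : Integrable φ μ) :
    Tendsto (fun s : ℝ => s ^ finrank ℝ E • ∫ x, φ (s • x) • g x ∂μ) (𝓝[>] 0)
      (𝓝 ((∫ x, φ x ∂μ) • ⨍ x in F, g x ∂μ)) := by
  have : IsFiniteMeasure (μ.restrict F) := isFiniteMeasure_restrict.2 hF_fin
  have hF_ne : μ.real F ≠ 0 :=
    ENNReal.toReal_ne_zero.2 ⟨hF.measure_ne_zero (NeZero.ne μ), hF_fin⟩
  have hmodulus : Tendsto (fun s : ℝ => M * ∫ t in F, translationModulus μ φ (s • t) ∂μ)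
      (𝓝[>] 0) (𝓝 0) := by
    simpa only [mul_zero] using
      ((tendsto_integral_translationModulus_smul hφ).const_mul M).mono_left nhdsWithin_le_nhds
  have hlim : Tendsto (fun s : ℝ => μ.real F • (s ^ finrank ℝ E • ∫ x, φ (s • x) • g x ∂μ))
      (𝓝[>] 0) (𝓝 ((∫ x, φ x ∂μ) • ∫ x in F, g x ∂μ)) := by
    refine tendsto_iff_norm_sub_tendsto_zero.2
      (squeeze_zero' (.of_forall fun s => norm_nonneg _) ?_ hmodulus)
    filter_upwards [self_mem_nhdsWithin] with s hs
    exact norm_integral_dilation_smul_sub_le_of_periodic hF hF_fin hg hgm hM hφ hs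
  simpa only [inv_smul_smul₀ hF_ne, smul_comm (μ.real F)⁻¹ (∫ x, φ x ∂μ), ← setAverage_eq]
    using hlim.const_smul (μ.real F)⁻¹

end Dilation

section Gaussian

variable {ι : Type*} [Fintype ι]

theorem exp_neg_mul_sum_sq_eq_prod (b : ℝ) (x : ι → ℝ) :
    Real.exp (-b * ∑ i, x i ^ 2) = ∏ i, Real.exp (-b * x i ^ 2) := by
  rw [Finset.mul_sum, Real.exp_sum]

theorem integrable_exp_neg_mul_sum_sq {b : ℝ} (hb : 0 < b) :
    Integrable fun x : ι → ℝ => Real.exp (-b * ∑ i, x i ^ 2) := by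
  simp only [exp_neg_mul_sum_sq_eq_prod]
  exact .fintype_prod (f := fun _ x => Real.exp (-b * x ^ 2))
    fun _ => integrable_exp_neg_mul_sq hb

theorem integral_exp_neg_mul_sum_sq (b : ℝ) :
    ∫ x : ι → ℝ, Real.exp (-b * ∑ i, x i ^ 2) = √(π / b) ^ Fintype.card ι := by
  simp only [exp_neg_mul_sum_sq_eq_prod]
  rw [integral_fintype_prod_volume_eq_pow (fun x : ℝ => Real.exp (-b * x ^ 2)), integral_gaussian]

end Gaussian

section IntegerLattice

variable {ι G : Type*}

theorem exists_norm_le_of_continuous_of_periodic [SeminormedAddCommGroup G] {g : (ι → ℝ) → G}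
    (hg : Continuous g) (hper : ∀ v : ι → ℤ, Function.Periodic g fun i => (v i : ℝ)) :
    ∃ M, ∀ x, ‖g x‖ ≤ M := by
  obtain ⟨M, hM⟩ := (isCompact_Icc (a := (0 : ι → ℝ)) (b := 1)).exists_bound_of_continuousOn
    hg.continuousOn
  refine ⟨M, fun x => ?_⟩
  have hfract_mem : (fun i => Int.fract (x i)) ∈ Set.Icc (0 : ι → ℝ) 1 :=
    ⟨fun i => Int.fract_nonneg _, fun i => (Int.fract_lt_one _).le⟩
  have hx : (fun i => Int.fract (x i)) + (fun i => (⌊x i⌋ : ℝ)) = x :=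
    funext fun i => Int.fract_add_floor _
  rw [← hx, hper]
  exact hM _ hfract_mem

theorem periodic_of_mem_span_pi_basisFun [Finite ι] {g : (ι → ℝ) → G}
    (hper : ∀ v : ι → ℤ, Function.Periodic g fun i => (v i : ℝ)) {v : ι → ℝ}
    (hv : v ∈ Submodule.span ℤ (Set.range (Pi.basisFun ℝ ι))) : Function.Periodic g v := by
  choose w hw using ((Pi.basisFun ℝ ι).mem_span_iff_repr_mem ℤ v).1 hv
  obtain rfl : (fun i => (w i : ℝ)) = v := funext fun i => by simpa using hw i
  exact hper w

theorem setAverage_fundamentalDomain_pi_basisFun [Fintype ι] [NormedAddCommGroup G]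
    [NormedSpace ℝ G] (g : (ι → ℝ) → G) :
    ⨍ x in ZSpan.fundamentalDomain (Pi.basisFun ℝ ι), g x = ∫ x in Set.Icc 0 1, g x := by
  have hvol : volume.real (Set.Icc (0 : ι → ℝ) 1) = 1 := by
    simp [Measure.real, Real.volume_Icc_pi]
  have hIco : ZSpan.fundamentalDomain (Pi.basisFun ℝ ι) =ᵐ[volume] Set.Icc (0 : ι → ℝ) 1 := by
    rw [ZSpan.fundamentalDomain_pi_basisFun]
    exact Measure.univ_pi_Ico_ae_eq_Icc
  rw [setAverage_congr hIco, setAverage_eq, hvol, inv_one, one_smul]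

end IntegerLattice

theorem tendsto_sqrt_nhdsGT_zero : Tendsto Real.sqrt (𝓝[>] 0) (𝓝[>] 0) := by
  refine tendsto_nhdsWithin_iff.2 ⟨?_, ?_⟩
  · simpa using (Real.continuous_sqrt.tendsto 0).mono_left nhdsWithin_le_nhds
  · filter_upwards [self_mem_nhdsWithin] with ε hε using Real.sqrt_pos.2 hε

theorem gaussian_average_periodic_general {ι G : Type*} [Fintype ι] [NormedAddCommGroup G]
    [NormedSpace ℝ G] [CompleteSpace G] {g : (ι → ℝ) → G} (hgm : AEStronglyMeasurable g)
    {M : ℝ} (hM : ∀ x, ‖g x‖ ≤ M)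
    (hper : ∀ v : ι → ℤ, Function.Periodic g fun i => (v i : ℝ)) :
    Tendsto
      (fun ε : ℝ => ε ^ ((Fintype.card ι : ℝ) / 2) •
        ∫ x : ι → ℝ, Real.exp (-ε * π * ∑ i, x i ^ 2) • g x)
      (𝓝[>] 0) (𝓝 (∫ x in Set.Icc 0 1, g x)) := by
  have hF := ZSpan.isAddFundamentalDomain' (Pi.basisFun ℝ ι) volume
  have hF_fin : volume (ZSpan.fundamentalDomain (Pi.basisFun ℝ ι)) ≠ ⊤ :=
    (ZSpan.fundamentalDomain_isBounded _).measure_lt_top.ne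
  have : Countable (Submodule.span ℤ (Set.range (Pi.basisFun ℝ ι))).toAddSubgroup :=
    inferInstanceAs (Countable (Submodule.span ℤ (Set.range (Pi.basisFun ℝ ι))))
  have hlim := (tendsto_integral_dilation_smul_of_periodic hF hF_fin
    (fun v hv => periodic_of_mem_span_pi_basisFun hper hv) hgm hM
    (integrable_exp_neg_mul_sum_sq Real.pi_pos)).comp tendsto_sqrt_nhdsGT_zero
  rw [setAverage_fundamentalDomain_pi_basisFun, integral_exp_neg_mul_sum_sq,
    div_self Real.pi_ne_zero, Real.sqrt_one, one_pow, one_smul] at hlim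
  refine hlim.congr' ?_
  filter_upwards [self_mem_nhdsWithin] with ε (hε : 0 < ε)
  have hpow : √ε ^ Fintype.card ι = ε ^ ((Fintype.card ι : ℝ) / 2) := by
    rw [Real.sqrt_eq_rpow, ← Real.rpow_mul_natCast hε.le, one_div_mul_eq_div]
  have hexp (x : ι → ℝ) : -π * ∑ i, (√ε • x) i ^ 2 = -ε * π * ∑ i, x i ^ 2 := by
    simp only [Pi.smul_apply, smul_eq_mul, mul_pow, Real.sq_sqrt hε.le, ← Finset.mul_sum]
    ring
  simp only [Function.comp_apply, Module.finrank_fintype_fun_eq_card, hpow, hexp]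

/-- Gaussian averaging of periodic functions: for every continuous `1`-periodic
(i.e. `ℤ^d`-periodic) function `g` on `ℝ^d`,
`lim_{ε→0⁺} ε^{d/2} ∫_{ℝ^d} g(x) e^{-επ|x|²} dx = ∫_{[0,1]^d} g(x) dx`. -/
theorem gaussian_average_periodic (d : ℕ) (g : (Fin d → ℝ) → ℝ)
    (hg : Continuous g)
    (hper : ∀ x : Fin d → ℝ, ∀ v : Fin d → ℤ, g (x + fun i => (v i : ℝ)) = g x) :
    Tendsto
      (fun ε : ℝ =>
        ε ^ ((d : ℝ) / 2) * ∫ x : Fin d → ℝ, g x * Real.exp (-ε * Real.pi * ∑ i, x i ^ 2))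
      (𝓝[>] 0)
      (𝓝 (∫ x in Set.Icc (0 : Fin d → ℝ) 1, g x)) := by
  obtain ⟨M, hM⟩ := exists_norm_le_of_continuous_of_periodic hg fun v x => hper x v
  simpa only [smul_eq_mul, mul_comm (Real.exp _), Fintype.card_fin] using
    gaussian_average_periodic_general hg.aestronglyMeasurable hM fun v x => hper x v
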